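/- arXiv:1706.01152 — 3 statements merged into one kernel-verified Lean document; each statement's English description precedes it below -/
import Mathlib

section
/- Let R be a (unital, possibly noncommutative) ring, and let G and H be finite additive abelian groups whose orders are coprime. Suppose the product group G × H (with componentwise addition) is equipped with an R-module structure. Then the action of R on G × H is componentwise: for every r ∈ R, g ∈ G, and h ∈ H, the second component of r • (g, 0) equals 0, the first component of r • (0, h) equals 0, and consequently r • (g, h) = (first component of r • (g, 0), second component of r • (0, h)). In particular, the subgroups G × {0} and {0} × H are submodules of G × H. -/
/-- An additive homomorphism between finite groups of coprime orders is zero. -/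
theorem AddMonoidHom.eq_zero_of_coprime_card {A B : Type*} [AddGroup A] [AddGroup B]
    [Fintype A] [Fintype B] (hcop : Nat.Coprime (Fintype.card A) (Fintype.card B))
    (f : A →+ B) (a : A) : f a = 0 := by
  rw [← AddMonoid.addOrderOf_eq_one_iff]
  exact Nat.eq_one_of_dvd_coprimes hcop
    ((addOrderOf_map_dvd f a).trans addOrderOf_dvd_card) addOrderOf_dvd_card

/-- If `G` and `H` are finite abelian groups of coprime orders, then any `R`-module
structure on `G × H` acts componentwise, and `G × {0}` and `{0} × H` are submodules. -/
theorem stmt_0 (R : Type*) [Ring R] (G H : Type*) [AddCommGroup G] [AddCommGroup H]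
    [Fintype G] [Fintype H] (hcop : Nat.Coprime (Fintype.card G) (Fintype.card H))
    [Module R (G × H)] :
    (∀ (r : R) (g : G) (h : H),
      (r • ((g, 0) : G × H)).2 = 0 ∧
      (r • ((0, h) : G × H)).1 = 0 ∧
      r • ((g, h) : G × H) = ((r • ((g, 0) : G × H)).1, (r • ((0, h) : G × H)).2)) ∧
    (∃ N : Submodule R (G × H), (N : Set (G × H)) = {p : G × H | p.2 = 0}) ∧
    (∃ N : Submodule R (G × H), (N : Set (G × H)) = {p : G × H | p.1 = 0}) := by
  have hsnd (r : R) (g : G) : (r • ((g, 0) : G × H)).2 = 0 :=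
    AddMonoidHom.eq_zero_of_coprime_card hcop
      ((AddMonoidHom.snd G H).comp
        ((DistribSMul.toAddMonoidHom (G × H) r).comp (AddMonoidHom.inl G H))) g
  have hfst (r : R) (h : H) : (r • ((0, h) : G × H)).1 = 0 :=
    AddMonoidHom.eq_zero_of_coprime_card hcop.symm
      ((AddMonoidHom.fst G H).comp
        ((DistribSMul.toAddMonoidHom (G × H) r).comp (AddMonoidHom.inr G H))) h
  refine ⟨fun r g h => ⟨hsnd r g, hfst r h, ?_⟩, ⟨
    { carrier := {p | p.2 = 0}
      add_mem' := fun {a b} ha hb => ?_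
      zero_mem' := rfl
      smul_mem' := ?_ }, rfl⟩, ⟨
    { carrier := {p | p.1 = 0}
      add_mem' := fun {a b} ha hb => ?_
      zero_mem' := rfl
      smul_mem' := ?_ }, rfl⟩⟩
  · have hsplit : ((g, h) : G × H) = (g, 0) + (0, h) := by simp
    rw [hsplit, smul_add]
    ext <;> simp [hsnd, hfst]
  · simp_all
  · rintro r ⟨g, h⟩ rfl
    exact hsnd r g
  · simp_all
  · rintro r ⟨g, h⟩ rfl
    exact hfst r h
end

section
/- Let R be a finite nontrivial ring. Then there exist a positive integer t, a finite field F, and a surjective ring homomorphism from R onto the matrix ring M_t(F) of t × t matrices over F. -/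
/-- Every finite division ring is isomorphic to a finite field living in `Type`. -/
theorem Finite.exists_field_ringEquiv (D : Type*) [DivisionRing D] [Finite D] :
    ∃ (F : Type) (_ : Field F) (_ : Fintype F), Nonempty (D ≃+* F) := by
  have : Finite (Shrink.{0} D) := Finite.of_equiv D (equivShrink.{0} D)
  exact ⟨Shrink.{0} D, (equivShrink.{0} D).symm.field, Fintype.ofFinite _,
    ⟨((equivShrink.{0} D).symm.ringEquiv).symm⟩⟩

/-- Every nontrivial semiprimary ring surjects onto a matrix ring over a division ring. -/
theorem IsSemiprimaryRing.exists_surjective_matrix_divisionRing.{u}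
    (R : Type u) [Ring R] [Nontrivial R] [IsSemiprimaryRing R] :
    ∃ (t : ℕ) (D : Type u) (_ : DivisionRing D) (φ : R →+* Matrix (Fin t) (Fin t) D),
      0 < t ∧ Function.Surjective φ := by
  have : Nontrivial (R ⧸ Ring.jacobson R) :=
    Ideal.Quotient.nontrivial_iff.mpr (Module.jacobson_lt_top R R).ne
  obtain ⟨n, D, d, _, hd, ⟨e⟩⟩ :=
    IsSemisimpleRing.exists_ringEquiv_pi_matrix_divisionRing (R ⧸ Ring.jacobson R)
  have : Nonempty (Fin n) := by
    by_contra h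
    rw [not_nonempty_iff] at h
    exact not_subsingleton _ e.toEquiv.subsingleton
  obtain ⟨i⟩ := this
  refine ⟨d i, D i, inferInstance,
    (Pi.evalRingHom _ i).comp (e.toRingHom.comp (Ideal.Quotient.mk (Ring.jacobson R))),
    (hd i).pos, ?_⟩
  exact (Function.surjective_eval i).comp
    (e.surjective.comp Ideal.Quotient.mk_surjective)

/-- Every finite nontrivial ring admits a surjective ring homomorphism onto a
matrix ring `M_t(F)` over a finite field `F`, for some positive integer `t`. -/
theorem stmt_2 (R : Type*) [Ring R] [Fintype R] [Nontrivial R] :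
    ∃ (t : ℕ) (F : Type) (_ : Field F) (_ : Fintype F)
      (φ : R →+* Matrix (Fin t) (Fin t) F), 0 < t ∧ Function.Surjective φ := by
  obtain ⟨t, D, _, φ, ht, hφ⟩ :=
    IsSemiprimaryRing.exists_surjective_matrix_divisionRing R
  have : Finite (Matrix (Fin t) (Fin t) D) := Finite.of_surjective φ hφ
  have : Finite D :=
    Finite.of_injective (fun a : D ↦ (Matrix.of fun _ _ ↦ a : Matrix (Fin t) (Fin t) D))
      fun _ _ h ↦ congrFun (congrFun h ⟨0, ht⟩) ⟨0, ht⟩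
  obtain ⟨F, _, _, ⟨e⟩⟩ := Finite.exists_field_ringEquiv D
  exact ⟨t, F, inferInstance, inferInstance, (e.mapMatrix : Matrix (Fin t) (Fin t) D ≃+* _).toRingHom.comp φ, ht,
    e.mapMatrix.surjective.comp hφ⟩
end

section
/- Let K be a field and let f : M₂(K) → M₂(K) be the map sending a 2 × 2 matrix X to the matrix obtained by keeping its diagonal entries and replacing its off-diagonal entries with 0, i.e., f(X) = diagonal(X₁₁, X₂₂). Then there do not exist matrices A, B ∈ M₂(K) such that f(X) = A · X · B for all X ∈ M₂(K). -/
/-- The map on `2 × 2` matrices over a field `K` that zeroes out the off-diagonal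
entries cannot be written as `X ↦ A * X * B` for fixed matrices `A`, `B`. -/
theorem stmt_7 (K : Type*) [Field K] :
    ¬ ∃ A B : Matrix (Fin 2) (Fin 2) K,
        ∀ X : Matrix (Fin 2) (Fin 2) K,
          Matrix.diagonal (fun i => X i i) = A * X * B := by
  rintro ⟨A, B, h⟩
  have hAB : A * B = 1 := by simpa using (h 1).symm
  have hBA : B * A = 1 := mul_eq_one_comm.mp hAB
  let E : Matrix (Fin 2) (Fin 2) K := !![0, 1; 0, 0]
  have hE : A * E * B = 0 := by
    rw [← h E]
    ext i j
    fin_cases i <;> fin_cases j <;> simp [E]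
  have hE_zero : E = 0 := calc
    E = (B * A) * E * (B * A) := by rw [hBA, one_mul, mul_one]
    _ = B * (A * E * B) * A := by simp only [mul_assoc]
    _ = 0 := by rw [hE, mul_zero, zero_mul]
  simpa [E] using congrFun (congrFun hE_zero 0) 1
end
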